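/- Every integral rank function on a skeletally small triangulated category C can be decomposed in a unique way as a locally finite sum of irreducible rank functions on C. -/

import Mathlib

/-!
Statement 9: Every integral rank function on a skeletally small triangulated category `C`
can be decomposed in a unique way as a locally finite sum of irreducible rank functions.
-/

open CategoryTheory CategoryTheory.Limits CategoryTheory.Pretriangulated

universe v u

variable (C : Type u) [Category.{v} C] [Preadditive C] [HasZeroObject C] [HasShift C ℤ]
  [∀ n : ℤ, (shiftFunctor C n).Additive] [Pretriangulated C] [HasBinaryBiproducts C]
  [EssentiallySmall.{v} C]

/-- A rank function on a triangulated category. -/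
structure RankFunction where
  rank : ∀ ⦃X Y : C⦄, (X ⟶ Y) → ℝ
  nonneg : ∀ ⦃X Y : C⦄ (f : X ⟶ Y), 0 ≤ rank f
  additive : ∀ ⦃X₁ Y₁ X₂ Y₂ : C⦄ (f : X₁ ⟶ Y₁) (g : X₂ ⟶ Y₂),
    rank (biprod.map f g) = rank f + rank g
  rankNullity : ∀ (T : Triangle C), (T ∈ distTriang C) →
    rank T.mor₁ + rank T.mor₂ = rank (𝟙 T.obj₂)
  shiftInv : ∀ ⦃X Y : C⦄ (f : X ⟶ Y),
    rank ((shiftFunctor C (1 : ℤ)).map f) = rank f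

variable {C}

/-- Integral rank function. -/
def RankFunction.Integral (ρ : RankFunction C) : Prop :=
  ∀ ⦃X Y : C⦄ (f : X ⟶ Y), ∃ n : ℤ, ρ.rank f = n

/-- Non-zero rank function. -/
def RankFunction.Nonzero (ρ : RankFunction C) : Prop :=
  ∃ (X Y : C) (f : X ⟶ Y), ρ.rank f ≠ 0

/-- An irreducible rank function: integral, non-zero, and not the sum of two non-zero
integral rank functions. -/
def RankFunction.Irreducible (ρ : RankFunction C) : Prop :=
  ρ.Integral ∧ ρ.Nonzero ∧
    ¬ ∃ σ τ : RankFunction C, σ.Integral ∧ τ.Integral ∧ σ.Nonzero ∧ τ.Nonzero ∧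
      ∀ ⦃X Y : C⦄ (f : X ⟶ Y), ρ.rank f = σ.rank f + τ.rank f

/-- `fam` is a locally finite decomposition of `ρ` into irreducible rank functions. -/
def RankFunction.IsDecomposition (ρ : RankFunction C) {I : Type (max u v)}
    (fam : I → RankFunction C) : Prop :=
  (∀ i, (fam i).Irreducible) ∧
  (∀ ⦃X Y : C⦄ (f : X ⟶ Y), {i | (fam i).rank f ≠ 0}.Finite) ∧
  (∀ ⦃X Y : C⦄ (f : X ⟶ Y), ρ.rank f = ∑ᶠ i, (fam i).rank f)

/-!
A rank function is the same thing as a `Σ`-invariant additive function on `mod C`, where `rank f` is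
the value at the image of `f`. It is therefore enough to control `rank` on the short exact sequences
`0 → im (a ≫ f) → im f → im (f ≫ b) → 0`, which can be expressed by lifting conditions in `C`.

Additivity makes `τ - σ` a rank function whenever `σ ≤ τ`, and it makes the infimum of the costs of
the finite filtrations of `im f`, each subquotient being charged its `σ`-rank or its `τ`-rank, the
meet `σ ⊓ τ`. Meets and differences of integral rank functions are integral, so an irreducible
`σ ≤ α + β` satisfies `σ ≤ α` or `σ ≤ β`, as for primes in a factorial monoid. Hence the sum of all
irreducible `σ`, each repeated as often as it fits below `ρ`, stays below `ρ`; it is all of `ρ`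
because every non-zero integral difference dominates an irreducible rank function, by Zorn's lemma.
Conversely, primality forces each `σ` to occur in any decomposition exactly that often.
-/

lemma le_add_inf_of_le_add {M : Type*} [AddCommMonoid M] [SemilatticeInf M]
    [IsOrderedCancelAddMonoid M] [CanonicallyOrderedAdd M] {a b c : M} (h : c ≤ a + b) :
    c ≤ a + c ⊓ b := by
  obtain ⟨e, he⟩ := exists_add_of_le (le_inf le_self_add le_self_add : a ≤ (a + c) ⊓ (a + b))
  have hec : e ≤ c := le_of_add_le_add_left (he.ge.trans inf_le_left)
  have heb : e ≤ b := le_of_add_le_add_left (he.ge.trans inf_le_right)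
  calc c ≤ (a + c) ⊓ (a + b) := le_inf le_add_self h
    _ = a + e := he
    _ ≤ a + c ⊓ b := by gcongr; exact le_inf hec heb

section WeakKernels

variable {D : Type u} [Category.{v} D] {K X X' Y Y' Z : D}

/-- `p` and `p'` form a weak pullback of `u` and `v`: the square commutes and satisfies the
existence part of the universal property of a pullback. -/
structure IsWeakPullback {P : D} (p : P ⟶ X) (p' : P ⟶ X') (u : X ⟶ Y) (v : X' ⟶ Y) : Prop where
  comm : p ≫ u = p' ≫ v
  exists_lift ⦃T : D⦄ (t : T ⟶ X) (t' : T ⟶ X') : t ≫ u = t' ≫ v → ∃ s, t = s ≫ p ∧ t' = s ≫ p'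

lemma IsWeakPullback.symm {P : D} {p : P ⟶ X} {p' : P ⟶ X'} {u : X ⟶ Y} {v : X' ⟶ Y}
    (h : IsWeakPullback p p' u v) : IsWeakPullback p' p v u where
  comm := h.comm.symm
  exists_lift _ t' t ht :=
    let ⟨s, hs, hs'⟩ := h.exists_lift t t' ht.symm
    ⟨s, hs', hs⟩

variable [HasZeroMorphisms D]

/-- `k` is a weak kernel of `f`: it satisfies the existence part, but not the uniqueness part, of
the universal property of a kernel. -/
structure IsWeakKernel (k : K ⟶ X) (f : X ⟶ Y) : Prop where
  comp_eq_zero : k ≫ f = 0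
  exists_fac ⦃T : D⦄ (t : T ⟶ X) : t ≫ f = 0 → ∃ s, t = s ≫ k

/-- Exactness of `0 → im (a ≫ f) → im f → im (f ≫ b) → 0`, where the images are those of the induced
maps between representable functors, i.e. of `f` seen as a morphism of `mod D`. -/
structure ImageExact (a : X' ⟶ X) (f : X ⟶ Y) (b : Y ⟶ Z) : Prop where
  comp_eq_zero : a ≫ f ≫ b = 0
  exists_fac ⦃T : D⦄ (t : T ⟶ X) : t ≫ f ≫ b = 0 → ∃ s, t ≫ f = s ≫ a ≫ f

lemma IsWeakKernel.imageExact_id {k : K ⟶ X} {f : X ⟶ Y} (h : IsWeakKernel k f) :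
    ImageExact k (𝟙 X) f where
  comp_eq_zero := by rw [Category.id_comp, h.comp_eq_zero]
  exists_fac _ t ht := by simpa using h.exists_fac t (by simpa using ht)

lemma ImageExact.of_mono (f : X ⟶ Y) (i : Y ⟶ Z) [Mono i] : ImageExact (0 : X' ⟶ X) f i where
  comp_eq_zero := zero_comp
  exists_fac _ t ht := ⟨0, by
    rw [zero_comp, ← cancel_mono i, Category.assoc, ht, zero_comp]⟩

lemma ImageExact.of_isSplitEpi (p : X' ⟶ X) [IsSplitEpi p] (f : X ⟶ Y) :
    ImageExact p f (0 : Y ⟶ Z) where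
  comp_eq_zero := by rw [comp_zero, comp_zero]
  exists_fac _ t _ := ⟨t ≫ section_ p, by simp⟩

lemma ImageExact.biprod_map [HasBinaryBiproducts D] (f : X ⟶ Y) (g : X' ⟶ Y') :
    ImageExact biprod.inl (biprod.map f g) biprod.snd where
  comp_eq_zero := by simp
  exists_fac _ t ht := ⟨t ≫ biprod.fst, by
    apply biprod.hom_ext
    · simp
    · simpa using ht⟩

lemma ImageExact.map {D' : Type*} [Category* D'] [HasZeroMorphisms D'] (F : D ⥤ D')
    [F.IsEquivalence] [F.PreservesZeroMorphisms] {a : X' ⟶ X} {f : X ⟶ Y} {b : Y ⟶ Z}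
    (h : ImageExact a f b) : ImageExact (F.map a) (F.map f) (F.map b) where
  comp_eq_zero := by rw [← F.map_comp, ← F.map_comp, h.comp_eq_zero, F.map_zero]
  exists_fac T t ht := by
    let e := F.objObjPreimageIso T
    obtain ⟨t', ht'⟩ := F.map_surjective (e.hom ≫ t)
    obtain ⟨s, hs⟩ := h.exists_fac t' (F.map_injective (by simp [ht', ht]))
    refine ⟨e.inv ≫ F.map s, ?_⟩
    rw [Category.assoc, ← F.map_comp, ← F.map_comp, ← hs, F.map_comp, ht', Category.assoc,
      e.inv_hom_id_assoc]

section

variable {W : D} {f : X ⟶ Y} {a : X' ⟶ X} {b : Y ⟶ Y'} {c : Z ⟶ X} {d : Y ⟶ W}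

lemma ImageExact.precomp (h : ImageExact c f d) {P : D} {p : P ⟶ X'} {p' : P ⟶ Z}
    (hp : IsWeakPullback p p' (a ≫ f) (c ≫ f)) : ImageExact p (a ≫ f) d where
  comp_eq_zero := by
    rw [← Category.assoc, hp.comm, Category.assoc, Category.assoc, h.comp_eq_zero, comp_zero]
  exists_fac T t ht := by
    obtain ⟨s, hs⟩ := h.exists_fac (t ≫ a) (by simpa only [Category.assoc] using ht)
    obtain ⟨r, rfl, -⟩ := hp.exists_lift t s (by rw [← hs, Category.assoc])
    exact ⟨r, Category.assoc _ _ _⟩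

lemma ImageExact.postcomp (h : ImageExact c f d) {Q : D} {q : Y' ⟶ Q} {q' : W ⟶ Q}
    (hq : IsWeakPullback (f ≫ b) (f ≫ d) q q') : ImageExact c (f ≫ b) q where
  comp_eq_zero := by
    rw [hq.comm, ← Category.assoc, h.comp_eq_zero, zero_comp]
  exists_fac T t ht := by
    obtain ⟨r, hr, hr'⟩ := hq.exists_lift (t ≫ f ≫ b) 0 (by rw [Category.assoc, ht, zero_comp])
    obtain ⟨s, hs⟩ := h.exists_fac r hr'.symm
    exact ⟨s, by rw [hr, ← Category.assoc, hs, Category.assoc, Category.assoc]⟩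

lemma ImageExact.isWeakKernel_lift [HasBinaryBiproducts D] (h : ImageExact a f b) {p : Y ⟶ Z}
    (hp : IsWeakKernel f p) : IsWeakKernel (a ≫ f) (biprod.lift p b) where
  comp_eq_zero := by
    apply biprod.hom_ext
    · simp [hp.comp_eq_zero]
    · simp [h.comp_eq_zero]
  exists_fac T t ht := by
    obtain ⟨s, rfl⟩ := hp.exists_fac t (by simpa using ht =≫ biprod.fst)
    exact h.exists_fac s (by simpa using ht =≫ biprod.snd)

end

end WeakKernels

section Triangulated

variable {D : Type u} [Category.{v} D] [Preadditive D]

lemma isWeakPullback_iff_isWeakKernel [HasBinaryBiproducts D] {P X X' Y : D} {p : P ⟶ X}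
    {p' : P ⟶ X'} {u : X ⟶ Y} {v : X' ⟶ Y} :
    IsWeakPullback p p' u v ↔ IsWeakKernel (biprod.lift p p') (biprod.desc u (-v)) where
  mp h :=
    { comp_eq_zero := by simp [h.comm]
      exists_fac T t ht := by
        obtain ⟨s, hs, hs'⟩ := h.exists_lift (t ≫ biprod.fst) (t ≫ biprod.snd) (by
          simpa [biprod.desc_eq, ← sub_eq_add_neg, sub_eq_zero] using ht)
        exact ⟨s, by ext <;> simp [hs, hs']⟩ }
  mpr h :=
    { comm := by simpa [← sub_eq_add_neg, sub_eq_zero] using h.comp_eq_zero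
      exists_lift T t t' ht := by
        obtain ⟨s, hs⟩ := h.exists_fac (biprod.lift t t') (by simp [ht])
        exact ⟨s, by simpa using hs =≫ biprod.fst, by simpa using hs =≫ biprod.snd⟩ }

lemma IsWeakPullback.of_isWeakKernel {X Y Z U V W : D} {f : X ⟶ Y} {p : Y ⟶ U} {q : U ⟶ W}
    {b : Y ⟶ Z} {p' : Z ⟶ V} {q' : V ⟶ W} {c : U ⟶ V} (hfp : f ≫ p = 0) (hpq : IsWeakKernel p q)
    (hfp' : IsWeakKernel (f ≫ b) p') (hpq' : p' ≫ q' = 0) (hpc : p ≫ c = b ≫ p')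
    (hcq : c ≫ q' = q) : IsWeakPullback p b c p' where
  comm := hpc
  exists_lift T t y hty := by
    have htq : t ≫ q = 0 := by
      rw [← hcq, ← Category.assoc, hty, Category.assoc, hpq', comp_zero]
    obtain ⟨s, rfl⟩ := hpq.exists_fac t htq
    obtain ⟨r, hr⟩ := hfp'.exists_fac (y - s ≫ b) (by
      rw [Preadditive.sub_comp, ← hty, Category.assoc, hpc, Category.assoc, sub_self])
    refine ⟨s + r ≫ f, by simp [hfp], ?_⟩
    rw [Preadditive.add_comp, Category.assoc]
    exact sub_eq_iff_eq_add'.1 hr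

lemma IsWeakKernel.desc [HasBinaryBiproducts D] {X Y Z U V : D} {q : U ⟶ X} {f : X ⟶ Y}
    {p' : Z ⟶ V} {q' : V ⟶ X} {c : U ⟶ V} (hqf : IsWeakKernel q f) (hpq' : IsWeakKernel p' q')
    (hcq : c ≫ q' = q) : IsWeakKernel (biprod.desc c (-p')) (q' ≫ f) where
  comp_eq_zero := by
    ext
    · simp [reassoc_of% hcq, hqf.comp_eq_zero]
    · simp [reassoc_of% hpq'.comp_eq_zero]
  exists_fac T t ht := by
    obtain ⟨w, hw⟩ := hqf.exists_fac (t ≫ q') (by simpa using ht)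
    obtain ⟨y, hy⟩ := hpq'.exists_fac (t - w ≫ c) (by
      rw [Preadditive.sub_comp, hw, Category.assoc, hcq, sub_self])
    refine ⟨biprod.lift w (-y), ?_⟩
    rw [biprod.lift_desc, Preadditive.neg_comp_neg]
    exact sub_eq_iff_eq_add'.1 hy

variable [HasZeroObject D] [HasShift D ℤ] [∀ n : ℤ, (shiftFunctor D n).Additive]
  [Pretriangulated D]

section

variable {X Y Z : D} {f : X ⟶ Y} {g : Y ⟶ Z} {h : Z ⟶ X⟦(1 : ℤ)⟧}
  (hT : Triangle.mk f g h ∈ distTriang D)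

include hT

lemma isWeakKernel₁₂_of_distTriang : IsWeakKernel f g :=
  ⟨comp_distTriang_mor_zero₁₂ _ hT, fun _ => Triangle.coyoneda_exact₂ _ hT⟩

lemma isWeakKernel₂₃_of_distTriang : IsWeakKernel g h :=
  ⟨comp_distTriang_mor_zero₂₃ _ hT, fun _ => Triangle.coyoneda_exact₃ _ hT⟩

lemma isWeakKernel₃₁_of_distTriang : IsWeakKernel h (f⟦(1 : ℤ)⟧') :=
  ⟨comp_distTriang_mor_zero₃₁ _ hT, fun _ => Triangle.coyoneda_exact₁ _ hT⟩

end

lemma exists_isWeakPullback {X X' Y : D} (u : X ⟶ Y) (v : X' ⟶ Y) :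
    ∃ (P : D) (p : P ⟶ X) (p' : P ⟶ X'), IsWeakPullback p p' u v := by
  obtain ⟨P, k, _, hk⟩ := distinguished_cocone_triangle₁ (biprod.desc u (-v))
  refine ⟨P, k ≫ biprod.fst, k ≫ biprod.snd, isWeakPullback_iff_isWeakKernel.2 ?_⟩
  have hk_eq : biprod.lift (k ≫ biprod.fst) (k ≫ biprod.snd) = k := by ext <;> simp
  rw [hk_eq]
  exact isWeakKernel₁₂_of_distTriang hk

lemma exists_isWeakPullback_of_span {X Y Y' : D} (u : X ⟶ Y) (v : X ⟶ Y') :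
    ∃ (Q : D) (q : Y ⟶ Q) (q' : Y' ⟶ Q), IsWeakPullback u v q q' := by
  obtain ⟨Q, r, _, hr⟩ := distinguished_cocone_triangle (biprod.lift u v)
  refine ⟨Q, biprod.inl ≫ r, -(biprod.inr ≫ r), isWeakPullback_iff_isWeakKernel.2 ?_⟩
  have hr_eq : biprod.desc (biprod.inl ≫ r) (- -(biprod.inr ≫ r)) = r := by ext <;> simp
  rw [hr_eq]
  exact isWeakKernel₁₂_of_distTriang hr

end Triangulated

section IsImageAdditive

variable {D : Type u} [Category.{v} D] [HasZeroMorphisms D] {M : Type*} [AddGroup M]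

/-- `φ` is additive on the short exact sequences `ImageExact`. These functions encode the additive
functions on `mod D`, evaluated at the images of morphisms of `D`. -/
def IsImageAdditive (φ : ∀ ⦃X Y : D⦄, (X ⟶ Y) → M) : Prop :=
  ∀ ⦃X' X Y Z : D⦄ ⦃a : X' ⟶ X⦄ ⦃f : X ⟶ Y⦄ ⦃b : Y ⟶ Z⦄, ImageExact a f b →
    φ f = φ (a ≫ f) + φ (f ≫ b)

namespace IsImageAdditive

variable {φ : ∀ ⦃X Y : D⦄, (X ⟶ Y) → M} (hφ : IsImageAdditive φ) {X X' Y Y' Z : D}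

include hφ

lemma map_zero : φ (0 : X ⟶ Y) = 0 := by
  simpa using hφ (ImageExact.of_isSplitEpi (𝟙 X) (0 : X ⟶ Y) (Z := Y))

lemma comp_mono (f : X ⟶ Y) (i : Y ⟶ Z) [Mono i] : φ (f ≫ i) = φ f := by
  rw [hφ (ImageExact.of_mono (X' := X) f i), zero_comp, hφ.map_zero, zero_add]

lemma isSplitEpi_comp (p : X' ⟶ X) [IsSplitEpi p] (f : X ⟶ Y) : φ (p ≫ f) = φ f := by
  rw [hφ (ImageExact.of_isSplitEpi p f (Z := Y)), comp_zero, hφ.map_zero, add_zero]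

lemma natIso_map {E : Type*} [Category* E] {F G : E ⥤ D} (e : F ≅ G) {A B : E} (f : A ⟶ B) :
    φ (F.map f) = φ (G.map f) := by
  rw [← NatIso.naturality_1 e f, hφ.isSplitEpi_comp, hφ.comp_mono]

lemma biprod_map [HasBinaryBiproducts D] (f : X ⟶ Y) (g : X' ⟶ Y') :
    φ (biprod.map f g) = φ f + φ g := by
  rw [hφ (ImageExact.biprod_map f g), biprod.inl_map, biprod.map_snd, hφ.comp_mono,
    hφ.isSplitEpi_comp]

lemma add_of_isWeakKernel {k : X ⟶ Y} {f : Y ⟶ Z} (h : IsWeakKernel k f) :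
    φ k + φ f = φ (𝟙 Y) := by
  rw [hφ h.imageExact_id, Category.comp_id, Category.id_comp]

end IsImageAdditive

end IsImageAdditive

namespace RankFunction

omit [EssentiallySmall.{v} C]

section ImageAdditive

variable (ρ : RankFunction C) {W X X' Y Y' Z : C}

lemma rank_iso_hom_comp (e : X' ≅ X) (f : X ⟶ Y) : ρ.rank (e.hom ≫ f) = ρ.rank f := by
  obtain ⟨Z, g, h, hT⟩ := distinguished_cocone_triangle f
  have hT' : Triangle.mk (e.hom ≫ f) g (h ≫ e.inv⟦(1 : ℤ)⟧') ∈ distTriang C := by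
    refine isomorphic_distinguished _ hT _
      (Triangle.isoMk _ _ e (Iso.refl Y) (Iso.refl Z) (Category.comp_id _)
        ((Category.comp_id _).trans (Category.id_comp _).symm) ?_)
    change (h ≫ e.inv⟦(1 : ℤ)⟧') ≫ e.hom⟦(1 : ℤ)⟧' = 𝟙 Z ≫ h
    simp [← Functor.map_comp]
  have hf : ρ.rank f + ρ.rank g = ρ.rank (𝟙 Y) := ρ.rankNullity _ hT
  have hef : ρ.rank (e.hom ≫ f) + ρ.rank g = ρ.rank (𝟙 Y) := ρ.rankNullity _ hT'
  linarith

lemma rank_comp_iso_hom (f : X ⟶ Y) (e : Y ≅ Y') : ρ.rank (f ≫ e.hom) = ρ.rank f := by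
  obtain ⟨Z, g, h, hT⟩ := distinguished_cocone_triangle₁ f
  have hT' : Triangle.mk g (f ≫ e.hom) (e.inv ≫ h) ∈ distTriang C := by
    refine isomorphic_distinguished _ hT _
      (Triangle.isoMk _ _ (Iso.refl Z) (Iso.refl X) e.symm
        ((Category.comp_id _).trans (Category.id_comp _).symm) ?_ ?_)
    · change (f ≫ e.hom) ≫ e.inv = 𝟙 X ≫ f
      simp
    · change (e.inv ≫ h) ≫ (𝟙 Z)⟦(1 : ℤ)⟧' = e.inv ≫ h
      simp
  have hf : ρ.rank g + ρ.rank f = ρ.rank (𝟙 X) := ρ.rankNullity _ hT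
  have hfe : ρ.rank g + ρ.rank (f ≫ e.hom) = ρ.rank (𝟙 X) := ρ.rankNullity _ hT'
  linarith

open ZeroObject in
lemma rank_to_zero (X : C) : ρ.rank (0 : X ⟶ (0 : C)) = 0 :=
  add_eq_left.1 (ρ.rankNullity _ (contractible_distinguished X))

open ZeroObject in
lemma rank_desc_comp (h : X ⟶ Y) (s : X' ⟶ X) : ρ.rank (biprod.desc h (s ≫ h)) = ρ.rank h := by
  have h_eq : biprod.desc h (s ≫ h) = (Biprod.unipotentLower s).hom ≫
      biprod.map h (0 : X' ⟶ (0 : C)) ≫ (isoBiprodZero (isZero_zero C)).symm.hom := by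
    ext <;> simp [Biprod.ofComponents]
  rw [h_eq, rank_iso_hom_comp, rank_comp_iso_hom, ρ.additive, rank_to_zero, add_zero]

lemma rank_eq_of_factors {f : X ⟶ Y} {g : X' ⟶ Y} (hf : ∃ s, f = s ≫ g) (hg : ∃ s, g = s ≫ f) :
    ρ.rank f = ρ.rank g := by
  obtain ⟨s, hs⟩ := hf
  obtain ⟨t, ht⟩ := hg
  have h_swap : biprod.desc f g = (biprod.braiding X X').hom ≫ biprod.desc g f := by
    ext <;> simp
  calc ρ.rank f = ρ.rank (biprod.desc f g) := by conv_rhs => rw [ht, rank_desc_comp]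
    _ = ρ.rank (biprod.desc g f) := by rw [h_swap, rank_iso_hom_comp]
    _ = ρ.rank g := by conv_lhs => rw [hs, rank_desc_comp]

lemma rank_add_rank_of_isWeakKernel {k : X ⟶ Y} {f : Y ⟶ Z} (h : IsWeakKernel k f) :
    ρ.rank k + ρ.rank f = ρ.rank (𝟙 Y) := by
  obtain ⟨K, k', _, hT⟩ := distinguished_cocone_triangle₁ f
  have hk' := isWeakKernel₁₂_of_distTriang hT
  rw [ρ.rank_eq_of_factors (hk'.exists_fac k h.comp_eq_zero)
    (h.exists_fac k' hk'.comp_eq_zero)]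
  exact ρ.rankNullity _ hT

lemma two_mul_rank_of_distTriang {f : X ⟶ Y} {g : Y ⟶ Z} {h : Z ⟶ X⟦(1 : ℤ)⟧}
    (hT : Triangle.mk f g h ∈ distTriang C) :
    2 * ρ.rank f = ρ.rank (𝟙 X) + ρ.rank (𝟙 Y) - ρ.rank (𝟙 Z) := by
  have hY := ρ.rank_add_rank_of_isWeakKernel (isWeakKernel₁₂_of_distTriang hT)
  have hZ := ρ.rank_add_rank_of_isWeakKernel (isWeakKernel₂₃_of_distTriang hT)
  have hX := ρ.rank_add_rank_of_isWeakKernel (isWeakKernel₃₁_of_distTriang hT)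
  rw [ρ.shiftInv, ← CategoryTheory.Functor.map_id, ρ.shiftInv] at hX
  linarith

lemma rank_comp_eq_of_imageExact {a : X' ⟶ X} {f : X ⟶ Y} {b : Y ⟶ Z} (h : ImageExact a f b)
    {q : W ⟶ X} (hq : IsWeakKernel q (f ≫ b)) : ρ.rank (q ≫ f) = ρ.rank (a ≫ f) := by
  obtain ⟨s, hs⟩ := hq.exists_fac a h.comp_eq_zero
  exact ρ.rank_eq_of_factors (h.exists_fac q hq.comp_eq_zero)
    ⟨s, by rw [← Category.assoc, ← hs]⟩

-- The Mayer–Vietoris sequence `X' → Y → U ⊞ Z → V → Y⟦1⟧` of the morphism of triangles completing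
-- `𝟙 X` and `b` is exact in the middle three places, which makes the octahedron unnecessary.
lemma isImageAdditive_rank : IsImageAdditive ρ.rank := by
  intro X' X Y Z a f b h
  obtain ⟨U, p, q, hT⟩ := distinguished_cocone_triangle f
  obtain ⟨V, p', q', hT'⟩ := distinguished_cocone_triangle (f ≫ b)
  obtain ⟨c, hpc, hqc⟩ : ∃ c : U ⟶ V, p ≫ c = b ≫ p' ∧ q ≫ (𝟙 X)⟦(1 : ℤ)⟧' = c ≫ q' :=
    complete_distinguished_triangle_morphism _ _ hT hT' (𝟙 X) b (Category.id_comp _).symm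
  have hcq : c ≫ q' = q := by simpa using hqc.symm
  have hfp := isWeakKernel₁₂_of_distTriang hT
  have hpq' := isWeakKernel₂₃_of_distTriang hT'
  have hsq := IsWeakPullback.of_isWeakKernel hfp.comp_eq_zero (isWeakKernel₂₃_of_distTriang hT)
    (isWeakKernel₁₂_of_distTriang hT') hpq'.comp_eq_zero hpc hcq
  have hY := ρ.rank_add_rank_of_isWeakKernel (h.isWeakKernel_lift hfp)
  have hUZ := ρ.rank_add_rank_of_isWeakKernel (isWeakPullback_iff_isWeakKernel.1 hsq)
  have hV := ρ.rank_add_rank_of_isWeakKernel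
    ((isWeakKernel₃₁_of_distTriang hT).desc hpq' hcq)
  have h_shift : ρ.rank (q' ≫ f⟦(1 : ℤ)⟧') = ρ.rank (a ≫ f) := by
    rw [ρ.rank_comp_eq_of_imageExact (h.map (shiftFunctor C (1 : ℤ)))
      (by simpa using isWeakKernel₃₁_of_distTriang hT'), ← Functor.map_comp, ρ.shiftInv]
  have hid : ρ.rank (𝟙 (U ⊞ Z)) = ρ.rank (𝟙 U) + ρ.rank (𝟙 Z) := by
    rw [← ρ.additive]
    congr 1
    ext <;> simp
  have hf := ρ.two_mul_rank_of_distTriang hT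
  have hfb := ρ.two_mul_rank_of_distTriang hT'
  linarith

lemma rank_shift (n : ℤ) (f : X ⟶ Y) : ρ.rank (f⟦n⟧') = ρ.rank f := by
  have h_succ (m : ℤ) : ρ.rank (f⟦m + 1⟧') = ρ.rank (f⟦m⟧') := by
    rw [ρ.isImageAdditive_rank.natIso_map (shiftFunctorAdd C m 1)]
    exact ρ.shiftInv _
  induction n with
  | zero => exact ρ.isImageAdditive_rank.natIso_map (shiftFunctorZero C ℤ) f
  | succ m hm => rw [h_succ, hm]
  | pred m hm => rw [← h_succ, sub_add_cancel, hm]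

/-- The rank function defined by a nonnegative shift-invariant function that is additive on
images. -/
@[simps]
def ofImageAdditive (φ : ∀ ⦃X Y : C⦄, (X ⟶ Y) → ℝ) (hφ : IsImageAdditive φ)
    (nonneg : ∀ ⦃X Y : C⦄ (f : X ⟶ Y), 0 ≤ φ f)
    (shiftInv : ∀ ⦃X Y : C⦄ (f : X ⟶ Y), φ (f⟦(1 : ℤ)⟧') = φ f) : RankFunction C where
  rank := φ
  nonneg := nonneg
  additive _ _ _ _ := hφ.biprod_map
  rankNullity _ hT := hφ.add_of_isWeakKernel (isWeakKernel₁₂_of_distTriang hT)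
  shiftInv := shiftInv

end ImageAdditive

section Order

@[ext]
lemma ext_rank {σ τ : RankFunction C} (h : ∀ ⦃X Y : C⦄ (f : X ⟶ Y), σ.rank f = τ.rank f) :
    σ = τ := by
  cases σ
  cases τ
  congr
  exact funext fun _ => funext fun _ => funext fun f => h f

instance : Zero (RankFunction C) where
  zero := ofImageAdditive (fun _ _ _ => 0) (fun _ _ _ _ _ _ _ _ => (add_zero 0).symm)
    (fun _ _ _ => le_rfl) (fun _ _ _ => rfl)

instance : Add (RankFunction C) where
  add σ τ := ofImageAdditive (fun _ _ f => σ.rank f + τ.rank f)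
    (fun _ _ _ _ _ _ _ h => by
      beta_reduce
      rw [σ.isImageAdditive_rank h, τ.isImageAdditive_rank h, add_add_add_comm])
    (fun _ _ f => add_nonneg (σ.nonneg f) (τ.nonneg f))
    (fun _ _ f => by rw [σ.shiftInv, τ.shiftInv])

@[simp]
lemma rank_zero {X Y : C} (f : X ⟶ Y) : (0 : RankFunction C).rank f = 0 := rfl

@[simp]
lemma rank_add (σ τ : RankFunction C) {X Y : C} (f : X ⟶ Y) :
    (σ + τ).rank f = σ.rank f + τ.rank f := rfl

instance : AddCommMonoid (RankFunction C) where
  add_assoc _ _ _ := ext_rank fun _ _ _ => add_assoc _ _ _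
  zero_add _ := ext_rank fun _ _ _ => zero_add _
  add_zero _ := ext_rank fun _ _ _ => add_zero _
  add_comm _ _ := ext_rank fun _ _ _ => add_comm _ _
  nsmul := nsmulRec

/-- Evaluation of rank functions at `f`, as a monoid homomorphism. -/
@[simps]
def rankHom {X Y : C} (f : X ⟶ Y) : RankFunction C →+ ℝ where
  toFun ρ := ρ.rank f
  map_zero' := rank_zero f
  map_add' σ τ := rank_add σ τ f

lemma rank_nsmul (n : ℕ) (σ : RankFunction C) {X Y : C} (f : X ⟶ Y) :
    (n • σ).rank f = n * σ.rank f := by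
  simpa using map_nsmul (rankHom f) n σ

lemma rank_sum {ι : Type*} (s : Finset ι) (fam : ι → RankFunction C) {X Y : C} (f : X ⟶ Y) :
    (∑ i ∈ s, fam i).rank f = ∑ i ∈ s, (fam i).rank f :=
  map_sum (rankHom f) fam s

instance : PartialOrder (RankFunction C) where
  le σ τ := ∀ ⦃X Y : C⦄ (f : X ⟶ Y), σ.rank f ≤ τ.rank f
  le_refl _ _ _ _ := le_rfl
  le_trans _ _ _ h h' _ _ f := (h f).trans (h' f)
  le_antisymm _ _ h h' := ext_rank fun _ _ f => (h f).antisymm (h' f)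

instance : IsOrderedCancelAddMonoid (RankFunction C) where
  add_le_add_left _ _ h τ _ _ f := add_le_add_left (h f) (τ.rank f)
  le_of_add_le_add_left _ _ _ h _ _ f := le_of_add_le_add_left (h f)

instance : CanonicallyOrderedAdd (RankFunction C) where
  exists_add_of_le {σ τ} h :=
    ⟨ofImageAdditive (fun _ _ f => τ.rank f - σ.rank f)
      (fun _ _ _ _ _ _ _ hf => by
        beta_reduce
        rw [τ.isImageAdditive_rank hf, σ.isImageAdditive_rank hf, add_sub_add_comm])
      (fun _ _ f => sub_nonneg.2 (h f)) (fun _ _ f => by rw [σ.shiftInv, τ.shiftInv]),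
      ext_rank fun _ _ _ => (add_sub_cancel _ _).symm⟩
  le_add_self σ τ _ _ f := le_add_of_nonneg_left (τ.nonneg f)
  le_self_add σ τ _ _ f := le_add_of_nonneg_right (τ.nonneg f)

lemma nonzero_iff {ρ : RankFunction C} : ρ.Nonzero ↔ ρ ≠ 0 := by
  rw [← not_iff_not, not_not]
  simp [Nonzero, RankFunction.ext_rank_iff]

end Order

section Integral

variable {ρ σ τ : RankFunction C}

lemma integral_iff_mem_range :
    ρ.Integral ↔ ∀ ⦃X Y : C⦄ (f : X ⟶ Y), ρ.rank f ∈ Set.range ((↑) : ℤ → ℝ) := by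
  simp only [Integral, Set.mem_range, eq_comm]

lemma Integral.one_le_rank (hρ : ρ.Integral) {X Y : C} {f : X ⟶ Y} (hf : ρ.rank f ≠ 0) :
    1 ≤ ρ.rank f := by
  obtain ⟨n, hn⟩ := hρ f
  have hpos : 0 < ρ.rank f := (ρ.nonneg f).lt_of_ne' hf
  rw [hn] at hpos ⊢
  exact_mod_cast hpos

variable (C) in
/-- The submonoid of integral rank functions. -/
def integralSubmonoid : AddSubmonoid (RankFunction C) where
  carrier := {ρ | ρ.Integral}
  zero_mem' _ _ _ := ⟨0, Int.cast_zero.symm⟩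
  add_mem' hσ hτ _ _ f := by
    obtain ⟨m, hm⟩ := hσ f
    obtain ⟨n, hn⟩ := hτ f
    exact ⟨m + n, by rw [rank_add, hm, hn, Int.cast_add]⟩

lemma Integral.of_add_left (h : (σ + τ).Integral) (hσ : σ.Integral) : τ.Integral := by
  intro X Y f
  obtain ⟨m, hm⟩ := h f
  obtain ⟨n, hn⟩ := hσ f
  exact ⟨m - n, by rw [Int.cast_sub, ← hm, ← hn, rank_add, add_sub_cancel_left]⟩

end Integral

section Inf

variable {σ τ : RankFunction C} {X X' Y Z : C}

/-- The costs of the finite filtrations of `im f`, each subquotient being charged its `σ`-rank or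
its `τ`-rank. -/
inductive FiltrationCost (σ τ : RankFunction C) : ∀ ⦃X Y : C⦄, (X ⟶ Y) → ℝ → Prop
  | left {X Y : C} (f : X ⟶ Y) : FiltrationCost σ τ f (σ.rank f)
  | right {X Y : C} (f : X ⟶ Y) : FiltrationCost σ τ f (τ.rank f)
  | glue {X' X Y Z : C} {a : X' ⟶ X} {f : X ⟶ Y} {b : Y ⟶ Z} {r s : ℝ} (h : ImageExact a f b) :
      FiltrationCost σ τ (a ≫ f) r → FiltrationCost σ τ (f ≫ b) s → FiltrationCost σ τ f (r + s)

namespace FiltrationCost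

lemma rank_le {κ : RankFunction C} (hσ : κ ≤ σ) (hτ : κ ≤ τ) {f : X ⟶ Y} {r : ℝ}
    (h : FiltrationCost σ τ f r) : κ.rank f ≤ r := by
  induction h with
  | left f => exact hσ f
  | right f => exact hτ f
  | glue h _ _ hr hs => exact (κ.isImageAdditive_rank h).trans_le (add_le_add hr hs)

lemma shift (n : ℤ) {f : X ⟶ Y} {r : ℝ} (h : FiltrationCost σ τ f r) :
    FiltrationCost σ τ (f⟦n⟧') r := by
  induction h with
  | left f => simpa only [rank_shift] using FiltrationCost.left (σ := σ) (τ := τ) (f⟦n⟧')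
  | right f => simpa only [rank_shift] using FiltrationCost.right (σ := σ) (τ := τ) (f⟦n⟧')
  | glue h _ _ hr hs =>
    exact glue (h.map (shiftFunctor C n)) (by rwa [← Functor.map_comp])
      (by rwa [← Functor.map_comp])

-- The refinement of two filtrations: intersect the steps of one with the steps of the other.
lemma exists_add {f : X ⟶ Y} {t : ℝ} (h : FiltrationCost σ τ f t) {W V : C} {c : W ⟶ X}
    {d : Y ⟶ V} (hf : ImageExact c f d) :
    ∃ r s, FiltrationCost σ τ (c ≫ f) r ∧ FiltrationCost σ τ (f ≫ d) s ∧ r + s = t := by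
  induction h generalizing W V with
  | left f => exact ⟨_, _, left _, left _, (σ.isImageAdditive_rank hf).symm⟩
  | right f => exact ⟨_, _, right _, right _, (τ.isImageAdditive_rank hf).symm⟩
  | @glue _ _ _ _ a f b _ _ hab _ _ ih_a ih_b =>
    obtain ⟨P, p, p', hp⟩ := exists_isWeakPullback (a ≫ f) (c ≫ f)
    obtain ⟨Q, q, q', hq⟩ := exists_isWeakPullback_of_span (f ≫ b) (f ≫ d)
    obtain ⟨r₁, r₂, hr₁, hr₂, rfl⟩ := ih_a (hf.precomp hp)
    obtain ⟨s₁, s₂, hs₁, hs₂, rfl⟩ := ih_b (hf.postcomp hq)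
    rw [hp.comm] at hr₁
    rw [hq.comm] at hs₂
    refine ⟨r₁ + s₁, r₂ + s₂, glue (hab.precomp hp.symm) hr₁ ?_,
      glue (hab.postcomp hq.symm) ?_ hs₂, add_add_add_comm _ _ _ _⟩
    · rwa [Category.assoc]
    · rwa [← Category.assoc]

open Pointwise in
lemma setOf_eq_add {a : X' ⟶ X} {f : X ⟶ Y} {b : Y ⟶ Z} (h : ImageExact a f b) :
    {t | FiltrationCost σ τ f t} =
      {r | FiltrationCost σ τ (a ≫ f) r} + {s | FiltrationCost σ τ (f ≫ b) s} := by
  ext t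
  constructor
  · intro ht
    obtain ⟨r, s, hr, hs, rfl⟩ := ht.exists_add h
    exact Set.add_mem_add hr hs
  · rintro ⟨r, hr, s, hs, rfl⟩
    exact glue h hr hs

variable (σ τ) in
lemma setOf_nonempty (f : X ⟶ Y) : {r | FiltrationCost σ τ f r}.Nonempty := ⟨_, left f⟩

variable (σ τ) in
lemma bddBelow_setOf (f : X ⟶ Y) : BddBelow {r | FiltrationCost σ τ f r} :=
  ⟨0, fun _ hr => rank_le (zero_le (a := σ)) (zero_le (a := τ)) hr⟩

variable (σ τ) in
lemma isImageAdditive_sInf :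
    IsImageAdditive fun (X Y : C) (f : X ⟶ Y) => sInf {r | FiltrationCost σ τ f r} := by
  intro X' X Y Z a f b h
  simp only [setOf_eq_add h]
  exact csInf_add (setOf_nonempty ..) (bddBelow_setOf ..) (setOf_nonempty ..) (bddBelow_setOf ..)

variable (σ τ) in
lemma sInf_shift_le (n : ℤ) (f : X ⟶ Y) :
    sInf {r | FiltrationCost σ τ (f⟦n⟧') r} ≤ sInf {r | FiltrationCost σ τ f r} :=
  csInf_le_csInf (bddBelow_setOf ..) (setOf_nonempty ..) fun _ => shift n

end FiltrationCost

open FiltrationCost in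
noncomputable instance : SemilatticeInf (RankFunction C) where
  inf σ τ := ofImageAdditive (fun _ _ f => sInf {r | FiltrationCost σ τ f r})
    (isImageAdditive_sInf σ τ)
    (fun _ _ f => le_csInf (setOf_nonempty σ τ f) fun _ hr => rank_le zero_le zero_le hr)
    (fun _ _ f => (sInf_shift_le σ τ 1 f).antisymm (by
      have h := sInf_shift_le σ τ (-1) (f⟦(1 : ℤ)⟧')
      exact ((isImageAdditive_sInf σ τ).natIso_map
        (shiftFunctorCompIsoId C (1 : ℤ) (-1) (by simp)) f).ge.trans h))
  inf_le_left σ τ _ _ f := csInf_le (bddBelow_setOf σ τ f) (left f)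
  inf_le_right σ τ _ _ f := csInf_le (bddBelow_setOf σ τ f) (right f)
  le_inf κ σ τ hσ hτ _ _ f := le_csInf (setOf_nonempty σ τ f) fun _ => rank_le hσ hτ

lemma Integral.inf (hσ : σ.Integral) (hτ : τ.Integral) : (σ ⊓ τ).Integral := by
  rw [integral_iff_mem_range] at *
  intro X Y f
  refine Int.isClosedEmbedding_coe_real.isClosed_range.closure_subset_iff.2 ?_
    (csInf_mem_closure (FiltrationCost.setOf_nonempty σ τ f) (FiltrationCost.bddBelow_setOf σ τ f))
  intro r hr
  induction hr with
  | left f => exact hσ f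
  | right f => exact hτ f
  | glue _ _ _ hr hs =>
    obtain ⟨m, rfl⟩ := hr
    obtain ⟨n, rfl⟩ := hs
    exact ⟨m + n, Int.cast_add m n⟩

end Inf

section Limit

open Filter Topology

variable {ι : Type*} {l : Filter ι} [l.NeBot] {fam : ι → RankFunction C}
  {φ : ∀ ⦃X Y : C⦄, (X ⟶ Y) → ℝ}
  (hφ : ∀ ⦃X Y : C⦄ (f : X ⟶ Y), Tendsto (fun i => (fam i).rank f) l (𝓝 (φ f)))

/-- The pointwise limit of rank functions along a nontrivial filter. -/
def ofTendsto : RankFunction C :=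
  ofImageAdditive φ
    (fun _ _ _ _ _ _ _ h => tendsto_nhds_unique (hφ _) (by
      simpa only [isImageAdditive_rank _ h] using (hφ _).add (hφ _)))
    (fun _ _ f => ge_of_tendsto' (hφ f) fun i => (fam i).nonneg f)
    (fun _ _ f => tendsto_nhds_unique (hφ _) (by simpa only [shiftInv] using hφ f))

lemma integral_ofTendsto (hfam : ∀ i, (fam i).Integral) : (ofTendsto hφ).Integral := by
  simp only [integral_iff_mem_range] at hfam ⊢
  intro X Y f
  exact Int.isClosedEmbedding_coe_real.isClosed_range.mem_of_tendsto (hφ f)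
    (Eventually.of_forall fun i => hfam i f)

end Limit

section Irreducible

variable {ρ σ τ α β : RankFunction C}

lemma irreducible_iff : σ.Irreducible ↔ σ.Integral ∧ σ ≠ 0 ∧
    ∀ α β : RankFunction C, α.Integral → β.Integral → σ = α + β → α = 0 ∨ β = 0 := by
  simp only [Irreducible, nonzero_iff, not_exists, not_and, RankFunction.ext_rank_iff (σ := σ),
    rank_add]
  refine and_congr_right fun _ => and_congr_right fun _ => forall₂_congr fun α β => ?_
  tauto

namespace Irreducible

lemma integral (hσ : σ.Irreducible) : σ.Integral := hσ.1

lemma ne_zero (hσ : σ.Irreducible) : σ ≠ 0 := (irreducible_iff.1 hσ).2.1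

lemma eq_zero_or_eq_of_le (hσ : σ.Irreducible) (hα : α.Integral) (h : α ≤ σ) :
    α = 0 ∨ α = σ := by
  obtain ⟨β, rfl⟩ := exists_add_of_le h
  refine ((irreducible_iff.1 hσ).2.2 α β hα (hσ.integral.of_add_left hα) rfl).imp_right ?_
  rintro rfl
  exact (add_zero α).symm

lemma eq_of_le (hσ : σ.Irreducible) (hτ : τ.Irreducible) (h : σ ≤ τ) : σ = τ :=
  (hτ.eq_zero_or_eq_of_le hσ.integral h).resolve_left hσ.ne_zero

lemma le_or_le_of_le_add (hσ : σ.Irreducible) (hβ : β.Integral) (h : σ ≤ α + β) :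
    σ ≤ α ∨ σ ≤ β := by
  rcases hσ.eq_zero_or_eq_of_le (hσ.integral.inf hβ) inf_le_left with h_inf | h_inf
  · exact .inl (by simpa only [h_inf, add_zero] using le_add_inf_of_le_add h)
  · exact .inr (inf_eq_left.1 h_inf)

/-- The submonoid of integral rank functions in which the irreducible rank function `σ` does not
occur. -/
def coprimeSubmonoid (hσ : σ.Irreducible) : AddSubmonoid (RankFunction C) where
  carrier := {β | β.Integral ∧ ¬ σ ≤ β}
  zero_mem' := ⟨(integralSubmonoid C).zero_mem, fun h => hσ.ne_zero (nonpos_iff_eq_zero.1 h)⟩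
  add_mem' := fun hα hβ => ⟨(integralSubmonoid C).add_mem hα.1 hβ.1, fun h =>
    (hσ.le_or_le_of_le_add hβ.1 h).elim hα.2 hβ.2⟩

lemma mem_coprimeSubmonoid (hσ : σ.Irreducible) (hτ : τ.Irreducible) (hne : σ ≠ τ) :
    τ ∈ hσ.coprimeSubmonoid :=
  ⟨hτ.integral, fun h => hne (hσ.eq_of_le hτ h)⟩

lemma nsmul_add_le (hσ : σ.Irreducible) (hβ : β ∈ hσ.coprimeSubmonoid) (hβρ : β ≤ ρ) {k : ℕ}
    (hk : k • σ ≤ ρ) : k • σ + β ≤ ρ := by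
  induction k with
  | zero => simpa only [zero_nsmul, zero_add] using hβρ
  | succ k ih =>
    obtain ⟨γ, rfl⟩ := exists_add_of_le (ih ((nsmul_le_nsmul_left zero_le k.le_succ).trans hk))
    have hσγ : σ ≤ γ + β := by
      rw [succ_nsmul, add_assoc, add_comm β γ] at hk
      exact le_of_add_le_add_left hk
    have hσγ : σ ≤ γ := (hσ.le_or_le_of_le_add hβ.1 hσγ).resolve_right hβ.2
    rw [succ_nsmul, add_right_comm]
    gcongr

end Irreducible

open Filter Topology in
lemma exists_integral_le_of_isChain {c : Set (RankFunction C)} (hc : IsChain (· ≤ ·) c)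
    (hne : c.Nonempty) (hint : ∀ σ ∈ c, σ.Integral) {X Y : C} {f : X ⟶ Y}
    (hf : ∀ σ ∈ c, σ.rank f ≠ 0) :
    ∃ σ : RankFunction C, σ.Integral ∧ σ.rank f ≠ 0 ∧ ∀ τ ∈ c, σ ≤ τ := by
  have : Nonempty c := hne.to_subtype
  have : IsCodirectedOrder c := ⟨fun a b => (hc.total a.2 b.2).elim
    (fun h => ⟨a, le_rfl, h⟩) fun h => ⟨b, h, le_rfl⟩⟩
  have hbdd ⦃X Y : C⦄ (g : X ⟶ Y) : BddBelow (Set.range fun σ : c => σ.1.rank g) :=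
    ⟨0, Set.forall_mem_range.2 fun σ => σ.1.nonneg g⟩
  have hlim ⦃X Y : C⦄ (g : X ⟶ Y) :
      Tendsto (fun σ : c => σ.1.rank g) atBot (𝓝 (⨅ σ : c, σ.1.rank g)) :=
    tendsto_atBot_ciInf (fun _ _ h => h g) (hbdd g)
  have hone : 1 ≤ ⨅ σ : c, σ.1.rank f :=
    le_ciInf fun σ => (hint σ σ.2).one_le_rank (hf σ σ.2)
  exact ⟨ofTendsto hlim, integral_ofTendsto hlim fun σ => hint σ σ.2, (one_pos.trans_le hone).ne',
    fun τ hτ _ _ g => ciInf_le (hbdd g) ⟨τ, hτ⟩⟩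

lemma irreducible_of_minimal {X Y : C} {f : X ⟶ Y}
    (h : Minimal (fun σ : RankFunction C => σ.Integral ∧ σ.rank f ≠ 0) σ) : σ.Irreducible := by
  obtain ⟨hint, hf⟩ := h.prop
  have hσ_ne : σ ≠ 0 := by
    rintro rfl
    exact hf (rank_zero f)
  refine irreducible_iff.2 ⟨hint, hσ_ne, ?_⟩
  rintro α β hα hβ rfl
  rcases ne_or_eq (α.rank f) 0 with hαf | hαf
  · exact .inr (add_eq_left.1 (h.eq_of_le ⟨hα, hαf⟩ le_self_add).symm)
  · have hβf : β.rank f ≠ 0 := by simpa only [rank_add, hαf, zero_add] using hf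
    exact .inl (add_eq_right.1 (h.eq_of_le ⟨hβ, hβf⟩ le_add_self).symm)

lemma Integral.exists_irreducible_le (hρ : ρ.Integral) (hne : ρ ≠ 0) :
    ∃ σ : RankFunction C, σ.Irreducible ∧ σ ≤ ρ := by
  obtain ⟨X, Y, f, hf⟩ := nonzero_iff.2 hne
  obtain ⟨σ, hσρ, hσ⟩ := zorn_le_nonempty₀ (α := (RankFunction C)ᵒᵈ)
    {σ | (OrderDual.ofDual σ).Integral ∧ (OrderDual.ofDual σ).rank f ≠ 0}
    (fun c hcS hc σ hσ =>
      let ⟨τ, hτ, hτf, hle⟩ := exists_integral_le_of_isChain (c := c) hc.symm ⟨σ, hσ⟩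
        (fun _ h => (hcS h).1) (fun _ h => (hcS h).2)
      ⟨τ, ⟨hτ, hτf⟩, hle⟩) ρ ⟨hρ, hf⟩
  exact ⟨σ, irreducible_of_minimal ⟨hσ.1, fun _ hτ hle => hσ.2 hτ hle⟩, hσρ⟩

end Irreducible

section LocallyFinite

open Filter

variable {ι : Type*} {ρ : RankFunction C} {fam : ι → RankFunction C}

lemma Integral.finite_setOf_rank_ne_zero (hfam : ∀ i, (fam i).Integral)
    (hle : ∀ s : Finset ι, ∑ i ∈ s, fam i ≤ ρ) {X Y : C} (f : X ⟶ Y) :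
    {i | (fam i).rank f ≠ 0}.Finite := by
  by_contra hinf
  obtain ⟨s, hs, hcard⟩ := Set.Infinite.exists_subset_card_eq hinf (⌊ρ.rank f⌋₊ + 1)
  have hcard_le : (s.card : ℝ) ≤ ρ.rank f := calc
    (s.card : ℝ) = ∑ i ∈ s, 1 := by simp
    _ ≤ ∑ i ∈ s, (fam i).rank f :=
      Finset.sum_le_sum fun i hi => (hfam i).one_le_rank (hs hi)
    _ ≤ ρ.rank f := rank_sum s fam f ▸ hle s f
  rw [hcard] at hcard_le
  exact (Nat.lt_floor_add_one (ρ.rank f)).not_ge (by exact_mod_cast hcard_le)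

variable (hfin : ∀ ⦃X Y : C⦄ (f : X ⟶ Y), {i | (fam i).rank f ≠ 0}.Finite)

include hfin in
lemma eventually_rank_sum_eq_finsum {X Y : C} (f : X ⟶ Y) :
    ∀ᶠ s : Finset ι in atTop, (∑ i ∈ s, fam i).rank f = ∑ᶠ i, (fam i).rank f := by
  filter_upwards [eventually_ge_atTop (hfin f).toFinset] with s hs
  rw [rank_sum, finsum_eq_sum_of_support_subset]
  exact fun i hi => hs ((hfin f).mem_toFinset.2 hi)

/-- The sum of a locally finite family of rank functions. -/
noncomputable def locallyFiniteSum : RankFunction C :=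
  ofTendsto fun _ _ f => tendsto_nhds_of_eventually_eq (eventually_rank_sum_eq_finsum hfin f)

@[simp]
lemma rank_locallyFiniteSum {X Y : C} (f : X ⟶ Y) :
    (locallyFiniteSum hfin).rank f = ∑ᶠ i, (fam i).rank f := rfl

lemma integral_locallyFiniteSum (hfam : ∀ i, (fam i).Integral) :
    (locallyFiniteSum hfin).Integral :=
  integral_ofTendsto _ fun _ => (integralSubmonoid C).sum_mem fun i _ => hfam i

lemma locallyFiniteSum_le (hle : ∀ s : Finset ι, ∑ i ∈ s, fam i ≤ ρ) :
    locallyFiniteSum hfin ≤ ρ := by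
  intro X Y f
  obtain ⟨s, hs⟩ := (eventually_rank_sum_eq_finsum hfin f).exists
  exact hs.symm.trans_le (hle s f)

lemma sum_le_locallyFiniteSum (s : Finset ι) : ∑ i ∈ s, fam i ≤ locallyFiniteSum hfin := by
  intro X Y f
  obtain ⟨t, ht, hst⟩ := ((eventually_rank_sum_eq_finsum hfin f).and
    (eventually_ge_atTop s)).exists
  have h_le : ∑ i ∈ s, fam i ≤ ∑ i ∈ t, fam i := Finset.sum_le_sum_of_subset hst
  exact (h_le f).trans_eq ht

end LocallyFinite

section Multiplicity

variable {ρ σ : RankFunction C}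

/-- The multiplicity of `σ` in `ρ`: the largest `k` with `k • σ ≤ ρ`. The junk value at `σ = 0`
is `0`. -/
noncomputable def multiplicity (ρ σ : RankFunction C) : ℕ := sSup {k : ℕ | k • σ ≤ ρ}

lemma bddAbove_setOf_nsmul_le (ρ : RankFunction C) (hσ : σ ≠ 0) :
    BddAbove {k : ℕ | k • σ ≤ ρ} := by
  obtain ⟨X, Y, f, hf⟩ := nonzero_iff.2 hσ
  refine ⟨⌊ρ.rank f / σ.rank f⌋₊, fun k hk => Nat.le_floor ?_⟩
  rw [le_div_iff₀ ((σ.nonneg f).lt_of_ne' hf), ← rank_nsmul]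
  exact hk f

lemma le_multiplicity_iff (hσ : σ ≠ 0) {k : ℕ} : k ≤ ρ.multiplicity σ ↔ k • σ ≤ ρ := by
  have hbdd := bddAbove_setOf_nsmul_le ρ hσ
  have hmem : ρ.multiplicity σ • σ ≤ ρ :=
    Nat.sSup_mem ⟨0, (zero_nsmul σ).trans_le zero_le⟩ hbdd
  exact ⟨fun hk => (nsmul_le_nsmul_left zero_le hk).trans hmem, fun hk => le_csSup hbdd hk⟩

lemma multiplicity_nsmul_le (hσ : σ ≠ 0) : ρ.multiplicity σ • σ ≤ ρ :=
  (le_multiplicity_iff hσ).1 le_rfl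

lemma sum_multiplicity_nsmul_le (ρ : RankFunction C)
    (s : Finset {σ : RankFunction C // σ.Irreducible}) :
    ∑ σ ∈ s, ρ.multiplicity σ.1 • σ.1 ≤ ρ := by
  classical
  induction s using Finset.induction_on with
  | empty => exact zero_le
  | insert σ s hσs ih =>
    rw [Finset.sum_insert hσs]
    refine σ.2.nsmul_add_le (sum_mem fun τ hτ => nsmul_mem ?_ _) ih
      (multiplicity_nsmul_le σ.2.ne_zero)
    exact σ.2.mem_coprimeSubmonoid τ.2 fun h => hσs (Subtype.ext h ▸ hτ)

/-- The indices of the irreducible components of `ρ`, counted with multiplicity. -/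
abbrev ComponentIndex (ρ : RankFunction C) : Type (max u v) :=
  Σ σ : {σ : RankFunction C // σ.Irreducible}, Fin (ρ.multiplicity σ.1)

/-- The family of the irreducible components of `ρ`, each repeated according to its
multiplicity. -/
def component (ρ : RankFunction C) (i : ρ.ComponentIndex) : RankFunction C := i.1.1

lemma component_irreducible (i : ρ.ComponentIndex) : (ρ.component i).Irreducible := i.1.2

lemma sum_component_sigma (ρ : RankFunction C)
    (s : Finset {σ : RankFunction C // σ.Irreducible}) :
    ∑ i ∈ s.sigma fun _ => Finset.univ, ρ.component i = ∑ σ ∈ s, ρ.multiplicity σ.1 • σ.1 := by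
  simp [Finset.sum_sigma, component]

lemma sum_component_le (t : Finset ρ.ComponentIndex) : ∑ i ∈ t, ρ.component i ≤ ρ := by
  classical
  calc ∑ i ∈ t, ρ.component i
      ≤ ∑ i ∈ (t.image Sigma.fst).sigma fun _ => Finset.univ, ρ.component i :=
        Finset.sum_le_sum_of_subset fun i hi =>
          Finset.mem_sigma.2 ⟨Finset.mem_image_of_mem _ hi, Finset.mem_univ _⟩
    _ = ∑ σ ∈ t.image Sigma.fst, ρ.multiplicity σ.1 • σ.1 := sum_component_sigma ..
    _ ≤ ρ := sum_multiplicity_nsmul_le ρ _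

lemma finite_setOf_rank_component_ne_zero (ρ : RankFunction C) ⦃X Y : C⦄ (f : X ⟶ Y) :
    {i | (ρ.component i).rank f ≠ 0}.Finite :=
  Integral.finite_setOf_rank_ne_zero (fun i => (component_irreducible i).integral)
    sum_component_le f

end Multiplicity

section Decomposition

variable {ρ : RankFunction C}

lemma isDecomposition_iff {I : Type (max u v)} {fam : I → RankFunction C} :
    ρ.IsDecomposition fam ↔ (∀ i, (fam i).Irreducible) ∧
      ∃ hfin : ∀ ⦃X Y : C⦄ (f : X ⟶ Y), {i | (fam i).rank f ≠ 0}.Finite,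
        ρ = locallyFiniteSum hfin := by
  simp only [IsDecomposition, RankFunction.ext_rank_iff, rank_locallyFiniteSum, exists_prop]

lemma Integral.isDecomposition_component (hρ : ρ.Integral) : ρ.IsDecomposition ρ.component := by
  have hfin := finite_setOf_rank_component_ne_zero ρ
  refine isDecomposition_iff.2 ⟨component_irreducible, hfin, ?_⟩
  obtain ⟨δ, hδ⟩ := exists_add_of_le (locallyFiniteSum_le hfin sum_component_le)
  have hδ_int : δ.Integral := (hδ ▸ hρ).of_add_left
    (integral_locallyFiniteSum hfin fun i => (component_irreducible i).integral)
  by_contra hne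
  obtain ⟨τ, hτ, hτδ⟩ := hδ_int.exists_irreducible_le (by
    rintro rfl
    exact hne (hδ.trans (add_zero _)))
  have hτ_sum : ρ.multiplicity τ • τ ≤ locallyFiniteSum hfin := by
    simpa only [sum_component_sigma, Finset.sum_singleton] using
      sum_le_locallyFiniteSum hfin (({⟨τ, hτ⟩} : Finset _).sigma fun _ => Finset.univ)
  have h_succ : (ρ.multiplicity τ + 1) • τ ≤ ρ := calc
    (ρ.multiplicity τ + 1) • τ = ρ.multiplicity τ • τ + τ := succ_nsmul ..
    _ ≤ locallyFiniteSum hfin + δ := add_le_add hτ_sum hτδ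
    _ = ρ := hδ.symm
  exact (Nat.lt_succ_self _).not_ge ((le_multiplicity_iff hτ.ne_zero).2 h_succ)

namespace IsDecomposition

variable {I : Type (max u v)} {fam : I → RankFunction C} (h : ρ.IsDecomposition fam)
  {σ : RankFunction C}

include h

lemma irreducible (i : I) : (fam i).Irreducible := h.1 i

lemma sum_le (s : Finset I) : ∑ i ∈ s, fam i ≤ ρ := by
  obtain ⟨hfin, hρ⟩ := (isDecomposition_iff.1 h).2
  exact (sum_le_locallyFiniteSum hfin s).trans_eq hρ.symm

lemma finite_fiber (hσ : σ ≠ 0) : {i | fam i = σ}.Finite := by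
  obtain ⟨X, Y, f, hf⟩ := nonzero_iff.2 hσ
  exact (h.2.1 f).subset fun i hi => by rwa [Set.mem_ofPred_eq, hi]

lemma le_ncard_fiber (hσ : σ.Irreducible) {k : ℕ} (hk : k • σ ≤ ρ) :
    k ≤ {i | fam i = σ}.ncard := by
  classical
  obtain ⟨X, Y, f, hf⟩ := nonzero_iff.2 hσ.ne_zero
  let s := (h.2.1 f).toFinset
  let fiber := s.filter fun i => fam i = σ
  let rest := s.filter fun i => ¬ fam i = σ
  have h_rest : ∑ i ∈ rest, fam i ∈ hσ.coprimeSubmonoid := sum_mem fun i hi =>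
    hσ.mem_coprimeSubmonoid (h.irreducible i) fun hi' => (Finset.mem_filter.1 hi).2 hi'.symm
  have hρf : ρ.rank f = fiber.card * σ.rank f + (∑ i ∈ rest, fam i).rank f := calc
    ρ.rank f = ∑ i ∈ s, (fam i).rank f := (h.2.2 f).trans (finsum_eq_sum _ (h.2.1 f))
    _ = ∑ i ∈ fiber, (fam i).rank f + ∑ i ∈ rest, (fam i).rank f :=
      (Finset.sum_filter_add_sum_filter_not s _ _).symm
    _ = ∑ _i ∈ fiber, σ.rank f + ∑ i ∈ rest, (fam i).rank f := by
      congr 1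
      exact Finset.sum_congr rfl fun _ hi => by rw [(Finset.mem_filter.1 hi).2]
    _ = fiber.card * σ.rank f + (∑ i ∈ rest, fam i).rank f := by
      rw [Finset.sum_const, nsmul_eq_mul, rank_sum]
  have h_le := hσ.nsmul_add_le h_rest (h.sum_le rest) hk f
  rw [rank_add, rank_nsmul, hρf, add_le_add_iff_right,
    mul_le_mul_iff_left₀ ((σ.nonneg f).lt_of_ne' hf), Nat.cast_le] at h_le
  refine h_le.trans ?_
  rw [← Set.ncard_coe_finset]
  exact Set.ncard_le_ncard (fun i hi => (Finset.mem_filter.1 hi).2) (h.finite_fiber hσ.ne_zero)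

lemma ncard_fiber (hσ : σ.Irreducible) : {i | fam i = σ}.ncard = ρ.multiplicity σ := by
  refine le_antisymm ((le_multiplicity_iff hσ.ne_zero).2 ?_)
    (h.le_ncard_fiber hσ (multiplicity_nsmul_le hσ.ne_zero))
  have hfin := h.finite_fiber hσ.ne_zero
  calc {i | fam i = σ}.ncard • σ = ∑ _i ∈ hfin.toFinset, σ := by
        rw [Finset.sum_const, Set.ncard_eq_toFinset_card _ hfin]
    _ = ∑ i ∈ hfin.toFinset, fam i :=
        Finset.sum_congr rfl fun _ hi => (hfin.mem_toFinset.1 hi).symm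
    _ ≤ ρ := h.sum_le _

lemma exists_equiv_componentIndex : ∃ e : I ≃ ρ.ComponentIndex, ∀ i, ρ.component (e i) = fam i := by
  let irr (i : I) : {σ : RankFunction C // σ.Irreducible} := ⟨fam i, h.irreducible i⟩
  have h_iff (σ) (i : I) : irr i = σ ↔ i ∈ {i | fam i = σ.1} := Subtype.ext_iff
  have h_fin (σ : {σ : RankFunction C // σ.Irreducible}) : Finite {i | fam i = σ.1} :=
    (h.finite_fiber σ.2.ne_zero).to_subtype
  exact ⟨(Equiv.sigmaFiberEquiv irr).symm.trans (Equiv.sigmaCongrRight fun σ =>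
    (Equiv.subtypeEquivRight (h_iff σ)).trans (Finite.equivFinOfCardEq (h.ncard_fiber σ.2))),
    fun _ => rfl⟩

end IsDecomposition

end Decomposition

end RankFunction

omit [EssentiallySmall.{v} C] in
theorem integral_rankFunction_unique_decomposition_general
    (ρ : RankFunction C) (hint : ρ.Integral) :
    ∃ (I : Type (max u v)) (fam : I → RankFunction C),
      ρ.IsDecomposition fam ∧
      ∀ (J : Type (max u v)) (gam : J → RankFunction C),
        ρ.IsDecomposition gam → ∃ e : J ≃ I, ∀ j, fam (e j) = gam j :=
  ⟨ρ.ComponentIndex, ρ.component, hint.isDecomposition_component,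
    fun _ _ h => h.exists_equiv_componentIndex⟩

theorem integral_rankFunction_unique_decomposition
    (ρ : RankFunction C) (hint : ρ.Integral) :
    ∃ (I : Type (max u v)) (fam : I → RankFunction C),
      ρ.IsDecomposition fam ∧
      ∀ (J : Type (max u v)) (gam : J → RankFunction C),
        ρ.IsDecomposition gam → ∃ e : J ≃ I, ∀ j, fam (e j) = gam j :=
  integral_rankFunction_unique_decomposition_general ρ hint
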